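/- There exists a constant C > 0 such that the following holds. Let s ≥ 2 and n ≥ A ≥ 1 be integers, and let T be a tree of size n with a distinguished root such that the subtree rooted at each child of the root has at most s vertices. Then T has a straight-line upward planar grid drawing of some width W ≤ C·A·log₂ s and height H ≤ C·(n/A)·s·(log₂ s)², in which the root is placed at the top-left corner (1, H) of the bounding box and no other vertex has x-coordinate 1. -/

import Mathlib

/-!
Put the root at the origin with the vertical axis pointing down, and write `L = ⌊log₂ s⌋ + 1`.

A rooted tree with at most `s` vertices has a standard drawing in a box of `L` columns and `s` rows:
stack the drawings of the subtrees of the children vertically, the largest subtree at the bottom in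
the column of the root and the others one column to the right (`ParTree.exists_standard`).
Each step to the right at least doubles the size of the subtree.

The subtrees of the children of the root are placed by unimodular images of this drawing. A *frame*
is a lattice basis `(x₁, y₁), (u, a)` with nonnegative entries; in its coordinates `(i, k)` the boxes
stand side by side with their roots in a common row `K`, so that the edges from the origin to these
roots stay above the boxes and do not meet each other. Several frames can be used together as soon
as the cones over their rows of boxes meet only at the origin (`ParTree.exists_fan`).

* If `A ≤ s`, the frames are the shears `(1, Δ * g), (0, 1)` for `g < n / A + 1`, each with `A` boxes
  starting at column `A * L`, where `Δ` is about `s / (A * L)` (`ParTree.fits_of_le`).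
* If `s ≤ A`, put `U = A / s` and `N = 32 * L * (n / A + 1)`. The second basis vectors are the coprime
  pairs `(u, a)` with `U / 8 ≤ u ≤ U` and `1 ≤ a ≤ N`, and each frame holds about `s / L` boxes in
  rows so far down that the cone is a thin neighbourhood of the ray through `(u, a)`. Different
  reduced fractions `a / u`, `a' / u'` differ by at least `1 / (u * u')`, which separates the cones
  (`ParTree.cone_unique`). A positive proportion of all pairs is coprime (`card_slopes`), hence there
  are enough boxes (`ParTree.fits_of_ge`).

Both cases give width `10 * A * L` and height `320 * s * L * (n / A + 1)`, within the claimed bounds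
because `L ≤ 2 * log₂ s` and `1 ≤ log₂ s`.
-/

open SimpleGraph

/-- A straight-line planar drawing of a graph `G`: an injective map of vertices to points of
`ℝ²` such that no vertex lies in the interior of (or on) a non-incident edge segment, and any
two distinct edge segments intersect exactly in the images of their common endpoints. -/
def IsStraightLineDrawing {V : Type} (G : SimpleGraph V) (f : V → ℝ × ℝ) : Prop :=
  Function.Injective f ∧
  (∀ u v w : V, G.Adj u v → w ≠ u → w ≠ v → f w ∉ segment ℝ (f u) (f v)) ∧
  (∀ u v u' v' : V, G.Adj u v → G.Adj u' v' → s(u, v) ≠ s(u', v') →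
    segment ℝ (f u) (f v) ∩ segment ℝ (f u') (f v') =
      f '' {w | (w = u ∨ w = v) ∧ (w = u' ∨ w = v')})

/-- A grid drawing of width `W` and height `H`: a straight-line planar drawing with all
vertices on integer grid points of `{1, …, W} × {1, …, H}`. -/
def IsGridDrawing {V : Type} (G : SimpleGraph V) (f : V → ℝ × ℝ) (W H : ℕ) : Prop :=
  IsStraightLineDrawing G f ∧
  ∀ x : V, ∃ i j : ℤ, 1 ≤ i ∧ i ≤ (W : ℤ) ∧ 1 ≤ j ∧ j ≤ (H : ℤ) ∧ f x = ((i : ℝ), (j : ℝ))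

/-- In a tree with distinguished root `r`, `u` is the parent of `v` iff `u` is a neighbor of
`v` lying on the path from `v` to `r` (equivalently, one step closer to the root). -/
def IsParent {V : Type} (G : SimpleGraph V) (r u v : V) : Prop :=
  G.Adj u v ∧ G.dist r u + 1 = G.dist r v

/-- A drawing is upward (w.r.t. root `r`) if every parent is drawn at a `y`-coordinate
greater than or equal to that of each of its children. -/
def IsUpward {V : Type} (G : SimpleGraph V) (r : V) (f : V → ℝ × ℝ) : Prop :=
  ∀ u v : V, IsParent G r u v → (f v).2 ≤ (f u).2

/-- `w` belongs to the subtree rooted at `v` (w.r.t. root `r`) iff `v` lies on the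
(unique) path from `r` to `w`. -/
def InSubtree {V : Type} (G : SimpleGraph V) (r v w : V) : Prop :=
  G.dist r v + G.dist v w = G.dist r w

/-! ### Rooted trees -/

/-- A rooted tree on `V` encoded by its parent function; the parent of the root is a junk value
that is never used. -/
structure ParTree (V : Type) where
  root : V
  par : V → V
  depth : V → ℕ
  depth_par : ∀ v, v ≠ root → depth (par v) + 1 = depth v

namespace ParTree

variable {V : Type} (T : ParTree V)

/-- `T.Child v c`: the vertex `c` is a child of `v`. -/
def Child (v c : V) : Prop := c ≠ T.root ∧ T.par c = v

lemma depth_le {v w : V} (h : Relation.ReflTransGen T.Child v w) :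
    T.depth v ≤ T.depth w ∧ (T.depth v = T.depth w → v = w) := by
  induction h with
  | refl => simp
  | tail _ h2 ih =>
    obtain ⟨h3, rfl⟩ := h2
    have := T.depth_par _ h3
    exact ⟨by omega, fun h => by omega⟩

lemma eq_of_common {c c' w : V} (h : Relation.ReflTransGen T.Child c w)
    (h' : Relation.ReflTransGen T.Child c' w) (hd : T.depth c = T.depth c') : c = c' := by
  induction h with
  | refl => exact ((T.depth_le h').2 hd.symm).symm
  | tail h1 h2 ih =>
    obtain ⟨h3, rfl⟩ := h2
    rcases Relation.ReflTransGen.cases_tail h' with rfl | ⟨b, hb, hb2⟩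
    · have := (T.depth_le h1).1
      have := T.depth_par _ h3
      omega
    · obtain ⟨-, rfl⟩ := hb2
      exact ih hb

variable [Fintype V]

open Classical in
/-- The children of `v`, as a finset. -/
noncomputable def children (v : V) : Finset V := Finset.univ.filter (T.Child v)

open Classical in
/-- The vertex set of the subtree rooted at `v`. -/
noncomputable def desc (v : V) : Finset V :=
  Finset.univ.filter (Relation.ReflTransGen T.Child v)

lemma mem_children {v c : V} : c ∈ T.children v ↔ c ≠ T.root ∧ T.par c = v := by
  simp [children, Child]

lemma mem_desc {v w : V} : w ∈ T.desc v ↔ Relation.ReflTransGen T.Child v w := by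
  simp [desc]

lemma self_mem_desc (v : V) : v ∈ T.desc v := T.mem_desc.2 .refl

lemma desc_pos (v : V) : 0 < (T.desc v).card := Finset.card_pos.2 ⟨v, T.self_mem_desc v⟩

lemma child_unique {v c c' w : V} (hc : c ∈ T.children v) (hc' : c' ∈ T.children v)
    (h : w ∈ T.desc c) (h' : w ∈ T.desc c') : c = c' := by
  rw [mem_children] at hc hc'
  have h1 := T.depth_par _ hc.1
  have h2 := T.depth_par _ hc'.1
  rw [hc.2] at h1
  rw [hc'.2] at h2
  exact T.eq_of_common (T.mem_desc.1 h) (T.mem_desc.1 h') (by omega)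

lemma exists_child {v w : V} (h : w ∈ T.desc v) (hne : w ≠ v) :
    ∃ c ∈ T.children v, w ∈ T.desc c := by
  rcases Relation.ReflTransGen.cases_head (T.mem_desc.1 h) with h | ⟨c, hc, hw⟩
  · exact absurd h.symm hne
  · exact ⟨c, T.mem_children.2 hc, T.mem_desc.2 hw⟩

lemma par_mem {v w : V} (h : w ∈ T.desc v) (hne : w ≠ v) : T.par w ∈ T.desc v := by
  rcases Relation.ReflTransGen.cases_tail (T.mem_desc.1 h) with h | ⟨c, hc, hw⟩
  · exact absurd h hne
  · rw [hw.2]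
    exact T.mem_desc.2 hc

lemma ne_root_of_mem {v w : V} (h : w ∈ T.desc v) (hne : w ≠ v) : w ≠ T.root := by
  rcases Relation.ReflTransGen.cases_tail (T.mem_desc.1 h) with h | ⟨c, hc, hw⟩
  · exact absurd h hne
  · exact hw.1

lemma desc_subset {v c : V} (hc : c ∈ T.children v) : T.desc c ⊆ T.desc v := fun _ hw =>
  T.mem_desc.2 (Relation.ReflTransGen.head (T.mem_children.1 hc) (T.mem_desc.1 hw))

lemma notMem_desc_child {v c : V} (hc : c ∈ T.children v) : v ∉ T.desc c := fun h => by
  have h1 := (T.depth_le (T.mem_desc.1 h)).1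
  rw [mem_children] at hc
  have h2 := T.depth_par _ hc.1
  rw [hc.2] at h2
  omega

lemma card_desc (v : V) :
    (T.desc v).card = 1 + ∑ c ∈ T.children v, (T.desc c).card := by
  classical
  have h : T.desc v = insert v ((T.children v).biUnion T.desc) := by
    ext w
    simp only [Finset.mem_insert, Finset.mem_biUnion]
    constructor
    · intro h
      by_cases hw : w = v
      · exact .inl hw
      · exact .inr (T.exists_child h hw)
    · rintro (rfl | ⟨c, hc, hw⟩)
      · exact T.self_mem_desc w
      · exact T.desc_subset hc hw
  rw [h, Finset.card_insert_of_notMem, Finset.card_biUnion, add_comm]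
  · intro c hc c' hc' hne
    rw [Function.onFun, Finset.disjoint_left]
    exact fun w hw hw' => hne (T.child_unique hc hc' hw hw')
  · simp only [Finset.mem_biUnion, not_exists, not_and]
    exact fun c hc => T.notMem_desc_child hc

lemma mem_desc_root (w : V) : w ∈ T.desc T.root := by
  generalize hd : T.depth w = d
  induction d generalizing w with
  | zero =>
    by_cases h : w = T.root
    · exact h ▸ T.self_mem_desc w
    · have := T.depth_par _ h
      omega
  | succ d ih =>
    by_cases h : w = T.root
    · exact h ▸ T.self_mem_desc w
    · have := T.depth_par _ h
      exact T.mem_desc.2 (.tail (T.mem_desc.1 (ih (T.par w) (by omega))) ⟨h, rfl⟩)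

/-- Functions prescribed on the subtrees of the children of `v`, and at `v`, glue together. -/
lemma glue {α : Type} (v : V) (a : α) (F : V → V → α) :
    ∃ G : V → α, G v = a ∧ ∀ c ∈ T.children v, ∀ w ∈ T.desc c, G w = F c w := by
  classical
  refine ⟨fun w => if h : ∃ c ∈ T.children v, w ∈ T.desc c then F h.choose w else a, ?_, ?_⟩
  · refine dif_neg ?_
    rintro ⟨c, hc, h⟩
    exact T.notMem_desc_child hc h
  · intro c hc w hw
    have h : ∃ c ∈ T.children v, w ∈ T.desc c := ⟨c, hc, hw⟩
    simp only [dif_pos h]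
    rw [T.child_unique h.choose_spec.1 hc h.choose_spec.2 hw]

/-! ### Crossing-free drawings -/

/-- `P` draws the subtree rooted at `v` without crossings. An edge is named by its lower endpoint,
and only the values of `P` on that subtree matter. -/
def Planar (v : V) (P : V → ℝ × ℝ) : Prop :=
  Set.InjOn P (T.desc v) ∧
  ∀ w ∈ T.desc v, ∀ w' ∈ T.desc v, w ≠ v → w' ≠ v → w ≠ w' →
    ∀ z ∈ segment ℝ (P (T.par w)) (P w), z ∈ segment ℝ (P (T.par w')) (P w') →
      ∃ t, P t = z ∧ (t = w ∨ t = T.par w) ∧ (t = w' ∨ t = T.par w')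

variable {T}

lemma Planar.congr {v : V} {P Q : V → ℝ × ℝ} (h : T.Planar v P)
    (hPQ : ∀ w ∈ T.desc v, P w = Q w) : T.Planar v Q := by
  refine ⟨fun a ha b hb hab => h.1 ha hb ?_, fun w hw w' hw' hv hv' hne z hz hz' => ?_⟩
  · rw [hPQ a ha, hPQ b hb, hab]
  · rw [← hPQ _ hw, ← hPQ _ (T.par_mem hw hv)] at hz
    rw [← hPQ _ hw', ← hPQ _ (T.par_mem hw' hv')] at hz'
    obtain ⟨t, h1, h2, h3⟩ := h.2 w hw w' hw' hv hv' hne z hz hz'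
    refine ⟨t, ?_, h2, h3⟩
    rw [← hPQ, h1]
    rcases h2 with rfl | rfl
    · exact hw
    · exact T.par_mem hw hv

/-- An affine bijection of the plane, written out in coordinates. -/
def affMap (α β γ α' β' γ' : ℝ) (z : ℝ × ℝ) : ℝ × ℝ :=
  (α + β * z.1 + γ * z.2, α' + β' * z.1 + γ' * z.2)

lemma affMap_injective {α β γ α' β' γ' : ℝ} (hdet : β * γ' - γ * β' ≠ 0) :
    Function.Injective (affMap α β γ α' β' γ') := by
  intro p q h
  simp only [affMap, Prod.mk.injEq] at h
  obtain ⟨h1, h2⟩ := h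
  ext
  · apply mul_left_cancel₀ hdet
    linear_combination γ' * h1 - γ * h2
  · apply mul_left_cancel₀ hdet
    linear_combination β * h2 - β' * h1

lemma affMap_segment {α β γ α' β' γ' : ℝ} {p q z : ℝ × ℝ}
    (h : z ∈ segment ℝ (affMap α β γ α' β' γ' p) (affMap α β γ α' β' γ' q)) :
    ∃ z₀ ∈ segment ℝ p q, affMap α β γ α' β' γ' z₀ = z := by
  obtain ⟨a, b, ha, hb, hab, rfl⟩ := h
  refine ⟨a • p + b • q, ⟨a, b, ha, hb, hab, rfl⟩, ?_⟩
  simp only [affMap, Prod.fst_add, Prod.snd_add, Prod.smul_fst, Prod.smul_snd, smul_eq_mul,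
    Prod.smul_mk, Prod.mk_add_mk, Prod.mk.injEq]
  constructor
  · linear_combination (-α) * hab
  · linear_combination (-α') * hab

lemma Planar.map {v : V} {P : V → ℝ × ℝ} (h : T.Planar v P) {α β γ α' β' γ' : ℝ}
    (hdet : β * γ' - γ * β' ≠ 0) :
    T.Planar v (fun w => affMap α β γ α' β' γ' (P w)) := by
  refine ⟨fun a ha b hb hab => h.1 ha hb (affMap_injective hdet hab),
    fun w hw w' hw' hv hv' hne z hz hz' => ?_⟩
  obtain ⟨z₀, hz₀, rfl⟩ := affMap_segment hz
  obtain ⟨z₁, hz₁, h01⟩ := affMap_segment hz'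
  obtain rfl := affMap_injective hdet h01
  obtain ⟨t, h1, h2⟩ := h.2 w hw w' hw' hv hv' hne z₁ hz₀ hz₁
  exact ⟨t, by simp only [h1], h2⟩

/-- In a crossing-free drawing the subtree root lies on no edge that is not incident to it. -/
lemma Planar.root_edge {c w : V} {P : V → ℝ × ℝ} (h : T.Planar c P) (hw : w ∈ T.desc c)
    (hne : w ≠ c) (hz : P c ∈ segment ℝ (P (T.par w)) (P w)) : T.par w = c := by
  obtain ⟨d, hd, hwd⟩ := T.exists_child hw hne
  have hd' := T.mem_children.1 hd
  by_cases hdw : w = d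
  · rw [hdw, hd'.2]
  have hdc : d ≠ c := fun e => T.notMem_desc_child hd (e ▸ T.self_mem_desc d)
  obtain ⟨t, h1, h2, h3⟩ := h.2 w hw d (T.desc_subset hd (T.self_mem_desc d)) hne hdc hdw (P c) hz
    (by rw [hd'.2]; exact left_mem_segment _ _ _)
  have ht : t ∈ T.desc c := by
    rcases h2 with rfl | rfl
    · exact hw
    · exact T.par_mem hw hne
  obtain rfl := h.1 ht (T.self_mem_desc c) h1
  rcases h2 with rfl | h2
  · exact absurd rfl hne
  · exact h2.symm

/-- Crossing-free drawings of the subtrees of the children of `v` that lie in disjoint convex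
regions `B c`, each met by the edge from `v` to `c` only at `c` and by the other edges at `v` not
at all, together form a crossing-free drawing of the subtree of `v`. -/
lemma Planar.star {v : V} {P : V → ℝ × ℝ} (B : V → Set (ℝ × ℝ))
    (hP : ∀ c ∈ T.children v, T.Planar c P)
    (hconv : ∀ c ∈ T.children v, Convex ℝ (B c))
    (hB : ∀ c ∈ T.children v, ∀ w ∈ T.desc c, P w ∈ B c)
    (hv : ∀ c ∈ T.children v, P v ∉ B c)
    (hBB : ∀ c ∈ T.children v, ∀ c' ∈ T.children v, c ≠ c' → ∀ z ∈ B c, z ∉ B c')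
    (hself : ∀ c ∈ T.children v, ∀ z ∈ segment ℝ (P v) (P c), z ∈ B c → z = P c)
    (hother : ∀ c ∈ T.children v, ∀ c' ∈ T.children v, c ≠ c' →
      ∀ z ∈ segment ℝ (P v) (P c), z ∉ B c')
    (hedge : ∀ c ∈ T.children v, ∀ c' ∈ T.children v, c ≠ c' →
      ∀ z ∈ segment ℝ (P v) (P c), z ∈ segment ℝ (P v) (P c') → z = P v) :
    T.Planar v P := by
  have hseg : ∀ c ∈ T.children v, ∀ w ∈ T.desc c, w ≠ c →
      ∀ z ∈ segment ℝ (P (T.par w)) (P w), z ∈ B c := fun c hc w hw hne z hz =>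
    (hconv c hc).segment_subset (hB c hc _ (T.par_mem hw hne)) (hB c hc w hw) hz
  have key : ∀ c ∈ T.children v, ∀ c' ∈ T.children v, ∀ w ∈ T.desc c', w ≠ c' →
      ∀ z ∈ segment ℝ (P v) (P c), z ∈ segment ℝ (P (T.par w)) (P w) →
      P c = z ∧ c = T.par w := by
    intro c hc c' hc' w hw hne z hz hz'
    have hzB := hseg c' hc' w hw hne z hz'
    by_cases hcc : c = c'
    · subst hcc
      obtain rfl := hself c hc z hz hzB
      exact ⟨rfl, ((hP c hc).root_edge hw hne hz').symm⟩
    · exact absurd hzB (hother c hc c' hc' hcc z hz)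
  refine ⟨fun a ha b hb hab => ?_, fun w hw w' hw' hwv hwv' hne z hz hz' => ?_⟩
  · by_cases hav : a = v
    · by_cases hbv : b = v
      · rw [hav, hbv]
      · obtain ⟨c, hc, hbc⟩ := T.exists_child hb hbv
        exact absurd (hab ▸ hB c hc b hbc) (hav ▸ hv c hc)
    · obtain ⟨c, hc, hac⟩ := T.exists_child ha hav
      by_cases hbv : b = v
      · exact absurd (hab ▸ hB c hc a hac) (hbv ▸ hv c hc)
      · obtain ⟨c', hc', hbc⟩ := T.exists_child hb hbv
        by_cases hcc : c = c'
        · subst hcc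
          exact (hP c hc).1 hac hbc hab
        · exact absurd (hB c' hc' b hbc) (hBB c hc c' hc' hcc _ (hab ▸ hB c hc a hac))
  · obtain ⟨c, hc, hwc⟩ := T.exists_child hw hwv
    obtain ⟨c', hc', hwc'⟩ := T.exists_child hw' hwv'
    have hcv := (T.mem_children.1 hc).2
    have hcv' := (T.mem_children.1 hc').2
    by_cases h1 : w = c
    · subst h1
      rw [hcv] at hz ⊢
      by_cases h2 : w' = c'
      · subst h2
        rw [hcv'] at hz' ⊢
        exact ⟨v, (hedge _ hc _ hc' hne z hz hz').symm, .inr rfl, .inr rfl⟩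
      · have := key _ hc _ hc' w' hwc' h2 z hz hz'
        exact ⟨w, this.1, .inl rfl, .inr this.2⟩
    · by_cases h2 : w' = c'
      · subst h2
        rw [hcv'] at hz' ⊢
        have := key _ hc' _ hc w hwc h1 z hz' hz
        exact ⟨w', this.1, .inr this.2, .inl rfl⟩
      · by_cases hcc : c = c'
        · subst hcc
          exact (hP c hc).2 w hwc w' hwc' h1 h2 hne z hz hz'
        · exact absurd (hseg c' hc' w' hwc' h2 z hz')
            (hBB c hc c' hc' hcc z (hseg c hc w hwc h1 z hz))

end ParTree

/-! ### The standard drawing of a small tree -/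

namespace ParTree

lemma segment_zero_left {p q z : ℝ × ℝ} (hp : p = 0) (hz : z ∈ segment ℝ p q) :
    ∃ t : ℝ, 0 ≤ t ∧ t ≤ 1 ∧ z.1 = t * q.1 ∧ z.2 = t * q.2 := by
  obtain ⟨a, b, ha, hb, hab, rfl⟩ := hz
  exact ⟨b, hb, by linarith, by simp [hp], by simp [hp]⟩

/-- Pairwise disjoint integer intervals of prescribed lengths, stacked from `1` on. -/
lemma exists_offsets {V : Type} (k : V → ℕ) (S : Finset V) :
    ∃ o : V → ℕ, (∀ c ∈ S, 1 ≤ o c ∧ o c + k c ≤ 1 + ∑ d ∈ S, k d) ∧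
      ∀ c ∈ S, ∀ c' ∈ S, c ≠ c' → o c + k c ≤ o c' ∨ o c' + k c' ≤ o c := by
  classical
  induction S using Finset.induction_on with
  | empty => exact ⟨fun _ => 0, by simp, by simp⟩
  | insert a S ha ih =>
    obtain ⟨o, h1, h2⟩ := ih
    refine ⟨fun c => if c = a then 1 + ∑ d ∈ S, k d else o c, ?_, ?_⟩
    · intro c hc
      rw [Finset.sum_insert ha]
      by_cases hca : c = a
      · subst hca
        simp only [if_pos]
        omega
      · have := h1 c ((Finset.mem_insert.1 hc).resolve_left hca)
        simp only [if_neg hca]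
        omega
    · intro c hc c' hc' hne
      by_cases hca : c = a
      · have hca' : c' ≠ a := fun h => hne (hca.trans h.symm)
        have := h1 c' ((Finset.mem_insert.1 hc').resolve_left hca')
        simp only [if_pos hca, if_neg hca']
        omega
      · have hcS := (Finset.mem_insert.1 hc).resolve_left hca
        by_cases hca' : c' = a
        · have := h1 c hcS
          simp only [if_neg hca, if_pos hca']
          omega
        · simp only [if_neg hca, if_neg hca']
          exact h2 c hcS c' ((Finset.mem_insert.1 hc').resolve_left hca') hne

variable {V : Type} [Fintype V] (T : ParTree V)

/-- The standard drawing of a rooted tree with `k` vertices, with the second coordinate pointing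
down: at most `1 + log₂ k` columns and at most `k` rows, the root at the top left. Along each edge
neither coordinate decreases. -/
structure Standard (v : V) (x y : V → ℕ) : Prop where
  x_root : x v = 0
  y_root : y v = 0
  x_le : ∀ w ∈ T.desc v, 2 ^ x w ≤ (T.desc v).card
  y_lt : ∀ w ∈ T.desc v, y w < (T.desc v).card
  x_mono : ∀ w ∈ T.desc v, w ≠ v → x (T.par w) ≤ x w
  y_mono : ∀ w ∈ T.desc v, w ≠ v → y (T.par w) ≤ y w
  planar : T.Planar v (fun w => ((x w : ℝ), (y w : ℝ)))

/-- The subtrees of the children are stacked vertically, the largest one at the bottom in the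
column of the root and all others one column further to the right. A step to the right at least
doubles the size of the subtree, which bounds the number of columns. -/
lemma exists_standard (v : V) : ∃ x y : V → ℕ, T.Standard v x y := by
  classical
  generalize hn : (T.desc v).card = n
  induction n using Nat.strong_induction_on generalizing v with
  | _ n ih =>
  have hcard := T.card_desc v
  have hlt : ∀ c ∈ T.children v, (T.desc c).card < n := fun c hc => by
    have := Finset.single_le_sum (f := fun c => (T.desc c).card) (fun _ _ => Nat.zero_le _) hc
    omega
  have hex : ∀ c, ∃ xy : (V → ℕ) × (V → ℕ), c ∈ T.children v → T.Standard c xy.1 xy.2 := by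
    intro c
    by_cases hc : c ∈ T.children v
    · obtain ⟨x, y, h⟩ := ih _ (hlt c hc) c rfl
      exact ⟨(x, y), fun _ => h⟩
    · exact ⟨(0, 0), fun h => absurd h hc⟩
  choose xy hxy using hex
  rcases (T.children v).eq_empty_or_nonempty with hempty | hne
  · have hv : ∀ w ∈ T.desc v, w = v := by
      intro w hw
      by_contra hwv
      obtain ⟨c, hc, -⟩ := T.exists_child hw hwv
      simp [hempty] at hc
    refine ⟨0, 0, rfl, rfl, ?_, ?_, ?_, ?_, ?_, ?_⟩
    · exact fun w _ => T.desc_pos v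
    · exact fun w _ => T.desc_pos v
    · exact fun w _ _ => le_rfl
    · exact fun w _ _ => le_rfl
    · intro a ha b hb _
      rw [hv a ha, hv b hb]
    · exact fun w hw _ _ hwv => absurd (hv w hw) hwv
  obtain ⟨h, hh, hmax⟩ := Finset.exists_max_image (T.children v) (fun c => (T.desc c).card) hne
  obtain ⟨o, ho1, ho2⟩ := exists_offsets (fun c => (T.desc c).card) ((T.children v).erase h)
  have hsum := Finset.add_sum_erase (T.children v) (fun c => (T.desc c).card) hh
  set tot := ∑ c ∈ (T.children v).erase h, (T.desc c).card with htot
  -- `a c`, `b c` are the column and the row of the child `c`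
  let a : V → ℕ := fun c => if c = h then 0 else 1
  let b : V → ℕ := fun c => if c = h then 1 + tot else o c
  have hah : a h = 0 := if_pos rfl
  have hbh : b h = 1 + tot := if_pos rfl
  have ha : ∀ c, c ≠ h → a c = 1 := fun c hc => if_neg hc
  have hb : ∀ c ∈ T.children v, c ≠ h → 1 ≤ b c ∧ b c + (T.desc c).card ≤ b h := by
    intro c hc hne
    have := ho1 c (Finset.mem_erase.2 ⟨hne, hc⟩)
    simp only [b, if_neg hne, if_pos]
    omega
  have hb' : ∀ c ∈ T.children v, ∀ c' ∈ T.children v, c ≠ h → c' ≠ h → c ≠ c' →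
      b c + (T.desc c).card ≤ b c' ∨ b c' + (T.desc c').card ≤ b c := by
    intro c hc c' hc' h1 h2 h3
    have := ho2 c (Finset.mem_erase.2 ⟨h1, hc⟩) c' (Finset.mem_erase.2 ⟨h2, hc'⟩) h3
    simpa only [b, if_neg h1, if_neg h2] using this
  have hb1 : ∀ c ∈ T.children v, 1 ≤ b c := by
    intro c hc
    by_cases hch : c = h
    · rw [hch]; omega
    · exact (hb c hc hch).1
  have hbtop : ∀ c ∈ T.children v, b c + (T.desc c).card ≤ (T.desc v).card := by
    intro c hc
    by_cases hch : c = h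
    · rw [hch]; omega
    · have := hb c hc hch
      omega
  obtain ⟨G, hGv, hG⟩ := T.glue v ((0 : ℕ), (0 : ℕ))
    (fun c w => (a c + (xy c).1 w, b c + (xy c).2 w))
  have hGc : ∀ c ∈ T.children v, G c = (a c, b c) := fun c hc => by
    rw [hG c hc c (T.self_mem_desc c), (hxy c hc).x_root, (hxy c hc).y_root]
    rfl
  have hGpar : ∀ c ∈ T.children v, ∀ w ∈ T.desc c, (G (T.par w)).1 ≤ (G w).1 ∧
      (G (T.par w)).2 ≤ (G w).2 := by
    intro c hc w hw
    by_cases hwc : w = c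
    · rw [hwc, (T.mem_children.1 hc).2, hGv]
      exact ⟨Nat.zero_le _, Nat.zero_le _⟩
    · rw [hG c hc w hw, hG c hc _ (T.par_mem hw hwc)]
      exact ⟨Nat.add_le_add_left ((hxy c hc).x_mono w hw hwc) _,
        Nat.add_le_add_left ((hxy c hc).y_mono w hw hwc) _⟩
  refine ⟨fun w => (G w).1, fun w => (G w).2, by rw [hGv], by rw [hGv], ?_, ?_, ?_, ?_, ?_⟩
  · intro w hw
    by_cases hwv : w = v
    · rw [hwv, hGv]
      exact T.desc_pos v
    obtain ⟨c, hc, hwc⟩ := T.exists_child hw hwv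
    rw [hG c hc w hwc]
    have h1 := (hxy c hc).x_le w hwc
    by_cases hch : c = h
    · subst hch
      simp only [hah, zero_add]
      omega
    · have h2 := hmax c hc
      have h3 := Finset.single_le_sum (f := fun c => (T.desc c).card) (fun _ _ => Nat.zero_le _)
        (Finset.mem_erase.2 ⟨hch, hc⟩)
      simp only [ha c hch, pow_add, pow_one]
      omega
  · intro w hw
    by_cases hwv : w = v
    · rw [hwv, hGv]
      exact T.desc_pos v
    obtain ⟨c, hc, hwc⟩ := T.exists_child hw hwv
    rw [hG c hc w hwc]
    have h1 := (hxy c hc).y_lt w hwc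
    have h2 := hbtop c hc
    simp only
    omega
  · intro w hw hwv
    obtain ⟨c, hc, hwc⟩ := T.exists_child hw hwv
    exact (hGpar c hc w hwc).1
  · intro w hw hwv
    obtain ⟨c, hc, hwc⟩ := T.exists_child hw hwv
    exact (hGpar c hc w hwc).2
  · have hP0 : (((G v).1 : ℝ), ((G v).2 : ℝ)) = 0 := by simp [hGv]
    let B : V → Set (ℝ × ℝ) := fun c => {z | (a c : ℝ) ≤ z.1 ∧ (b c : ℝ) ≤ z.2 ∧
      (c ≠ h → z.2 + 1 ≤ b c + (T.desc c).card)}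
    have hcast : ∀ c ∈ T.children v, c ≠ h → (b c : ℝ) + (T.desc c).card ≤ b h :=
      fun c hc hne => by exact_mod_cast (hb c hc hne).2
    have hb1' : ∀ c ∈ T.children v, (1 : ℝ) ≤ b c := fun c hc => by exact_mod_cast hb1 c hc
    have hah' : (a h : ℝ) = 0 := by rw [hah]; simp
    have ha' : ∀ c, c ≠ h → (a c : ℝ) = 1 := fun c hc => by rw [ha c hc]; simp
    -- the boxes occupy disjoint ranges of rows
    have hBB : ∀ c ∈ T.children v, ∀ c' ∈ T.children v, c ≠ c' → ∀ z ∈ B c, z ∉ B c' := by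
      rintro c hc c' hc' hcc z ⟨-, h1, h2⟩ ⟨-, h3, h4⟩
      by_cases hch : c = h
      · have hch' : c' ≠ h := fun e => hcc (hch.trans e.symm)
        subst hch
        linarith [hcast c' hc' hch', h4 hch']
      · by_cases hch' : c' = h
        · subst hch'
          linarith [hcast c hc hch, h2 hch]
        · have h5 := h2 hch
          have h6 := h4 hch'
          rcases hb' c hc c' hc' hch hch' hcc with h7 | h7
          · have : (b c : ℝ) + (T.desc c).card ≤ b c' := by exact_mod_cast h7
            linarith
          · have : (b c' : ℝ) + (T.desc c').card ≤ b c := by exact_mod_cast h7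
            linarith
    have hBc : ∀ c ∈ T.children v, ((a c : ℝ), (b c : ℝ)) ∈ B c := by
      intro c hc
      refine ⟨le_rfl, le_rfl, fun _ => ?_⟩
      have : (1 : ℝ) ≤ (T.desc c).card := by exact_mod_cast T.desc_pos c
      simp only
      linarith
    refine Planar.star B ?_ ?_ ?_ ?_ hBB ?_ ?_ ?_
    · intro c hc
      refine ((hxy c hc).planar.map (α := a c) (β := 1) (γ := 0) (α' := b c) (β' := 0) (γ' := 1)
        (by norm_num)).congr fun w hw => ?_
      simp [affMap, hG c hc w hw]
    · rintro c - p ⟨hp1, hp2, hp3⟩ q ⟨hq1, hq2, hq3⟩ s t hs ht hst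
      refine ⟨?_, ?_, fun hch => ?_⟩
      · simp only [Prod.fst_add, Prod.smul_fst, smul_eq_mul]
        nlinarith
      · simp only [Prod.snd_add, Prod.smul_snd, smul_eq_mul]
        nlinarith
      · have h1 := hp3 hch
        have h2 := hq3 hch
        simp only [Prod.snd_add, Prod.smul_snd, smul_eq_mul]
        nlinarith
    · intro c hc w hw
      have h1 : (((xy c).2 w : ℝ)) + 1 ≤ (T.desc c).card := by
        exact_mod_cast (hxy c hc).y_lt w hw
      simp only [hG c hc w hw, B, Set.mem_ofPred_eq, Nat.cast_add]
      exact ⟨by linarith [Nat.cast_nonneg (α := ℝ) ((xy c).1 w)],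
        by linarith [Nat.cast_nonneg (α := ℝ) ((xy c).2 w)], fun _ => by linarith⟩
    · rintro c hc ⟨-, h1, -⟩
      simp only [hGv, Nat.cast_zero] at h1
      linarith [hb1' c hc]
    · intro c hc z hz hzB
      obtain ⟨t, ht0, ht1, hz1, hz2⟩ := segment_zero_left hP0 hz
      simp only [hGc c hc] at hz1 hz2 ⊢
      have h1 := hzB.2.1
      rw [hz2] at h1
      have ht : t = 1 := by nlinarith [hb1' c hc]
      ext
      · simp [hz1, ht]
      · simp [hz2, ht]
    · intro c hc c' hc' hcc z hz hzB
      obtain ⟨t, ht0, ht1, hz1, hz2⟩ := segment_zero_left hP0 hz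
      simp only [hGc c hc] at hz1 hz2
      by_cases hch' : c' = h
      · have h1 := hzB.2.1
        have h2 := hcast c hc (fun e => hcc (e.trans hch'.symm))
        have h3 : (1 : ℝ) ≤ (T.desc c).card := by exact_mod_cast T.desc_pos c
        rw [hz2, hch'] at h1
        nlinarith [hb1' c hc]
      · have h1 := hzB.1
        rw [hz1, ha' c' hch'] at h1
        by_cases hch : c = h
        · rw [hch, hah'] at h1
          linarith
        · rw [ha' c hch] at h1
          have ht : t = 1 := by linarith
          have hzc : z = ((a c : ℝ), (b c : ℝ)) := by
            ext
            · simp [hz1, ht]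
            · simp [hz2, ht]
          exact hBB c hc c' hc' hcc z (hzc ▸ hBc c hc) hzB
    · intro c hc c' hc' hcc z hz hz'
      obtain ⟨t, ht0, ht1, hz1, hz2⟩ := segment_zero_left hP0 hz
      obtain ⟨t', ht0', ht1', hz1', hz2'⟩ := segment_zero_left hP0 hz'
      simp only [hGc c hc] at hz1 hz2
      simp only [hGc c' hc'] at hz1' hz2'
      have hz0 : z = 0 → z = (((G v).1 : ℝ), ((G v).2 : ℝ)) := fun e => by rw [e, hP0]
      apply hz0
      have hbc := hb1' c hc
      have hbc' := hb1' c' hc'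
      have ht : t = 0 ∨ t' = 0 := by
        by_cases hch : c = h
        · have hch' : c' ≠ h := fun e => hcc (hch.trans e.symm)
          rw [hch, hah'] at hz1
          rw [ha' c' hch'] at hz1'
          right; linarith
        · by_cases hch' : c' = h
          · rw [hch', hah'] at hz1'
            rw [ha' c hch] at hz1
            left; linarith
          · rw [ha' c' hch'] at hz1'
            rw [ha' c hch] at hz1
            have htt : t = t' := by linarith
            have hbb : (b c : ℝ) ≠ b c' := by
              have h1 := T.desc_pos c
              have h2 := T.desc_pos c'
              have h3 := hb' c hc c' hc' hch hch' hcc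
              have : b c ≠ b c' := by omega
              exact_mod_cast this
            left
            have : t * (b c - b c') = 0 := by rw [htt] at hz2 ⊢; linarith
            exact (mul_eq_zero.1 this).resolve_right (sub_ne_zero.2 hbb)
      rcases ht with ht | ht
      · ext
        · simp [hz1, ht]
        · simp [hz2, ht]
      · ext
        · simp [hz1', ht]
        · simp [hz2', ht]

end ParTree

/-! ### Fans of frames -/

namespace ParTree

/-- A basis `(x₁, y₁), (u, a)` of the lattice `ℤ²` with entries in `ℕ` and determinant `1`. -/
structure Frame where
  x₁ : ℕ
  y₁ : ℕ
  u : ℕ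
  a : ℕ
  det : a * x₁ = u * y₁ + 1

namespace Frame

/-- The point with coordinates `(i, k)` in the basis `F`. -/
def pt (F : Frame) (i k : ℝ) : ℝ × ℝ := (F.x₁ * i + F.u * k, F.y₁ * i + F.a * k)

lemma det_real (F : Frame) : (F.a : ℝ) * F.x₁ = F.u * F.y₁ + 1 := by exact_mod_cast F.det

lemma eq_fst (F : Frame) (i k : ℝ) : F.a * (F.pt i k).1 - F.u * (F.pt i k).2 = i := by
  simp only [pt]
  linear_combination i * F.det_real

lemma eq_snd (F : Frame) (i k : ℝ) : F.x₁ * (F.pt i k).2 - F.y₁ * (F.pt i k).1 = k := by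
  simp only [pt]
  linear_combination k * F.det_real

lemma smul_pt (F : Frame) (t i k : ℝ) : t • F.pt i k = F.pt (t * i) (t * k) := by
  ext <;> simp only [pt, Prod.smul_mk, smul_eq_mul] <;> ring

lemma pt_inj (F : Frame) {i k i' k' : ℝ} (h : F.pt i k = F.pt i' k') : i = i' ∧ k = k' := by
  constructor
  · rw [← F.eq_fst i k, h, F.eq_fst]
  · rw [← F.eq_snd i k, h, F.eq_snd]

end Frame

variable {V : Type} [Fintype V] (T : ParTree V)

/-- The children `c` of the root are distributed over frames `F (ix c)`. In its frame, the standard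
drawing of the subtree of `c` is placed in the `j c`-th of `q` adjacent boxes of width `L` and
height `s`; all these boxes have their top at height `K`, so the edge from the origin to the corner
of one box meets no other box. If the cones spanned by the rows of boxes in different frames meet
only at the origin, the resulting drawing has no crossings. -/
lemma exists_fan {ι : Type} (L s q i₀ K : ℕ) (hK : 1 ≤ K)
    (hs : ∀ c ∈ T.children T.root, (T.desc c).card ≤ s)
    (hL : ∀ x, 2 ^ x ≤ s → x < L)
    (F : ι → Frame) (ix : V → ι) (j : V → ℕ)
    (hj : ∀ c ∈ T.children T.root, j c < q)
    (hinj : ∀ c ∈ T.children T.root, ∀ c' ∈ T.children T.root, c ≠ c' → ix c = ix c' → j c ≠ j c')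
    (hcone : ∀ c ∈ T.children T.root, ∀ c' ∈ T.children T.root, ∀ i k i' k' t : ℝ,
      i₀ ≤ i → i + 1 ≤ i₀ + q * L → K ≤ k → k + 1 ≤ K + s →
      i₀ ≤ i' → i' + 1 ≤ i₀ + q * L → K ≤ k' → k' + 1 ≤ K + s → 0 < t →
      (F (ix c)).pt i k = t • (F (ix c')).pt i' k' → ix c = ix c') :
    ∃ X Y : V → ℕ, X T.root = 0 ∧ Y T.root = 0 ∧
      (∀ w, w ≠ T.root → ∃ c ∈ T.children T.root, ∃ i k : ℕ, i₀ ≤ i ∧ i < i₀ + q * L ∧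
        K ≤ k ∧ k < K + s ∧ X w = (F (ix c)).x₁ * i + (F (ix c)).u * k ∧
        Y w = (F (ix c)).y₁ * i + (F (ix c)).a * k) ∧
      (∀ w, w ≠ T.root → Y (T.par w) ≤ Y w) ∧
      T.Planar T.root (fun w => ((X w : ℝ), (Y w : ℝ))) := by
  classical
  choose x y hxy using T.exists_standard
  -- the coordinates of `w` in the frame used for `c`
  let I : V → V → ℕ := fun c w => i₀ + j c * L + x c w
  let Q : V → V → ℕ := fun c w => K + y c w
  obtain ⟨G, hGv, hG⟩ := T.glue T.root ((0 : ℕ), (0 : ℕ))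
    (fun c w => ((F (ix c)).x₁ * I c w + (F (ix c)).u * Q c w,
      (F (ix c)).y₁ * I c w + (F (ix c)).a * Q c w))
  have hGr : ∀ c ∈ T.children T.root, ∀ w ∈ T.desc c,
      (((G w).1 : ℝ), ((G w).2 : ℝ)) = (F (ix c)).pt (I c w) (Q c w) := by
    intro c hc w hw
    rw [hG c hc w hw]
    simp [Frame.pt]
  have hIc : ∀ c, I c c = i₀ + j c * L := fun c => by simp [I, (hxy c).x_root]
  have hQc : ∀ c, Q c c = K := fun c => by simp [Q, (hxy c).y_root]
  have hxL : ∀ c ∈ T.children T.root, ∀ w ∈ T.desc c, x c w < L := fun c hc w hw =>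
    hL _ (((hxy c).x_le w hw).trans (hs c hc))
  have hys : ∀ c ∈ T.children T.root, ∀ w ∈ T.desc c, y c w < s := fun c hc w hw =>
    ((hxy c).y_lt w hw).trans_le (hs c hc)
  have hjq : ∀ c ∈ T.children T.root, j c * L + L ≤ q * L := fun c hc => by
    have := Nat.mul_le_mul_right L (hj c hc)
    rwa [Nat.succ_mul] at this
  refine ⟨fun w => (G w).1, fun w => (G w).2, by simp only [hGv], by simp only [hGv], ?_, ?_, ?_⟩
  · intro w hw
    obtain ⟨c, hc, hwc⟩ := T.exists_child (T.mem_desc_root w) hw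
    have h1 := hxL c hc w hwc
    have h2 := hys c hc w hwc
    have h3 := hjq c hc
    refine ⟨c, hc, I c w, Q c w, ?_, ?_, ?_, ?_, by simp only [hG c hc w hwc],
      by simp only [hG c hc w hwc]⟩
    all_goals simp only [I, Q]; omega
  · intro w hw
    obtain ⟨c, hc, hwc⟩ := T.exists_child (T.mem_desc_root w) hw
    by_cases hwc' : w = c
    · rw [hwc', (T.mem_children.1 hc).2]
      simp only [hGv]
      exact Nat.zero_le _
    · simp only
      rw [hG c hc w hwc, hG c hc _ (T.par_mem hwc hwc')]
      exact Nat.add_le_add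
        (Nat.mul_le_mul_left _ (Nat.add_le_add_left ((hxy c).x_mono w hwc hwc') _))
        (Nat.mul_le_mul_left _ (Nat.add_le_add_left ((hxy c).y_mono w hwc hwc') _))
  · have hP0 : (((G T.root).1 : ℝ), ((G T.root).2 : ℝ)) = 0 := by simp [hGv]
    have hK1 : (1 : ℝ) ≤ K := by exact_mod_cast hK
    let Box : V → ℝ → ℝ → Prop := fun c i k => (i₀ : ℝ) + j c * L ≤ i ∧ i + 1 ≤ i₀ + j c * L + L ∧
      K ≤ k ∧ k + 1 ≤ K + s
    let B : V → Set (ℝ × ℝ) := fun c => {z | ∃ i k : ℝ, Box c i k ∧ (F (ix c)).pt i k = z}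
    have hBox : ∀ c ∈ T.children T.root, ∀ w ∈ T.desc c, Box c (I c w) (Q c w) := by
      intro c hc w hw
      have h1 : (x c w : ℝ) + 1 ≤ L := by exact_mod_cast hxL c hc w hw
      have h2 : (y c w : ℝ) + 1 ≤ s := by exact_mod_cast hys c hc w hw
      have h3 := Nat.cast_nonneg (α := ℝ) (x c w)
      have h4 := Nat.cast_nonneg (α := ℝ) (y c w)
      simp only [Box, I, Q, Nat.cast_add, Nat.cast_mul]
      exact ⟨by linarith, by linarith, by linarith, by linarith⟩
    -- boxes at proportional points belong to the same frame
    have hframe : ∀ c ∈ T.children T.root, ∀ c' ∈ T.children T.root, ∀ i k i' k' t : ℝ,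
        Box c i k → Box c' i' k' → 0 < t →
        (F (ix c)).pt i k = t • (F (ix c')).pt i' k' → ix c = ix c' ∧ i = t * i' ∧ k = t * k' := by
      intro c hc c' hc' i k i' k' t h h' ht he
      have h1 : ((j c * L + L : ℕ) : ℝ) ≤ (q * L : ℕ) := by exact_mod_cast hjq c hc
      have h2 : ((j c' * L + L : ℕ) : ℝ) ≤ (q * L : ℕ) := by exact_mod_cast hjq c' hc'
      push_cast at h1 h2
      have h3 : (0 : ℝ) ≤ j c * L := by positivity
      have h4 : (0 : ℝ) ≤ j c' * L := by positivity
      have hix := hcone c hc c' hc' i k i' k' t (by linarith [h.1]) (by linarith [h.2.1]) h.2.2.1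
        h.2.2.2 (by linarith [h'.1]) (by linarith [h'.2.1]) h'.2.2.1 h'.2.2.2 ht he
      rw [← hix, Frame.smul_pt] at he
      exact ⟨hix, (F (ix c)).pt_inj he⟩
    -- within one frame, different boxes share no column
    have hcol : ∀ c ∈ T.children T.root, ∀ c' ∈ T.children T.root, c ≠ c' → ix c = ix c' →
        ∀ i k k' : ℝ, Box c i k → Box c' i k' → False := by
      intro c hc c' hc' hcc hix i k k' h h'
      rcases Nat.lt_or_gt_of_ne (hinj c hc c' hc' hcc hix) with hlt | hlt
      · have h1 : (((j c + 1) * L : ℕ) : ℝ) ≤ (j c' * L : ℕ) := by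
          exact_mod_cast Nat.mul_le_mul_right L hlt
        push_cast at h1
        linarith [h.2.1, h'.1]
      · have h1 : (((j c' + 1) * L : ℕ) : ℝ) ≤ (j c * L : ℕ) := by
          exact_mod_cast Nat.mul_le_mul_right L hlt
        push_cast at h1
        linarith [h.1, h'.2.1]
    have hz0 : ∀ c i k, Box c i k → (F (ix c)).pt i k ≠ 0 := by
      intro c i k h he
      have h1 := (F (ix c)).eq_snd i k
      rw [he] at h1
      simp only [Prod.fst_zero, Prod.snd_zero, mul_zero, sub_zero] at h1
      linarith [h.2.2.1]
    have hedge0 : ∀ c ∈ T.children T.root, ∀ z ∈ segment ℝ (((G T.root).1 : ℝ), ((G T.root).2 : ℝ))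
        (((G c).1 : ℝ), ((G c).2 : ℝ)), z ≠ 0 →
        ∃ t : ℝ, 0 < t ∧ t ≤ 1 ∧ z = t • (F (ix c)).pt (I c c) (Q c c) := by
      intro c hc z hz hne
      obtain ⟨t, ht0, ht1, hz1, hz2⟩ := segment_zero_left hP0 hz
      have hzt : z = t • (F (ix c)).pt (I c c) (Q c c) := by
        rw [← hGr c hc c (T.self_mem_desc c)]
        ext
        · simp [hz1]
        · simp [hz2]
      refine ⟨t, lt_of_le_of_ne ht0 fun h0 => hne ?_, ht1, hzt⟩
      rw [hzt, ← h0, zero_smul]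
    have hcross : ∀ c ∈ T.children T.root, ∀ c' ∈ T.children T.root,
        ∀ z ∈ segment ℝ (((G T.root).1 : ℝ), ((G T.root).2 : ℝ))
        (((G c).1 : ℝ), ((G c).2 : ℝ)), z ∈ B c' →
        c = c' ∧ z = (F (ix c)).pt (I c c) (Q c c) := by
      rintro c hc c' hc' z hz ⟨i, k, hb, rfl⟩
      obtain ⟨t, ht0, ht1, hzt⟩ := hedge0 c hc _ hz (hz0 c' i k hb)
      have hself := hBox c hc c (T.self_mem_desc c)
      obtain ⟨hix, hi, hk⟩ := hframe c' hc' c hc _ _ _ _ t hb hself ht0 hzt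
      have ht : t = 1 := by
        have h1 := hb.2.2.1
        rw [hk, hQc] at h1
        nlinarith
      rw [ht, one_mul] at hi
      rw [ht, one_smul] at hzt
      refine ⟨by_contra fun hcc => ?_, hzt⟩
      exact hcol c hc c' hc' hcc hix.symm _ _ _ hself (hi ▸ hb)
    refine Planar.star B ?_ ?_ ?_ ?_ ?_ ?_ ?_ ?_
    · intro c hc
      have hd := (F (ix c)).det_real
      refine ((hxy c).planar.map
        (α := (F (ix c)).x₁ * (i₀ + j c * L) + (F (ix c)).u * K) (β := (F (ix c)).x₁)
        (γ := (F (ix c)).u) (α' := (F (ix c)).y₁ * (i₀ + j c * L) + (F (ix c)).a * K)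
        (β' := (F (ix c)).y₁) (γ' := (F (ix c)).a)
        (by rw [mul_comm, hd]; simp)).congr fun w hw => ?_
      rw [hGr c hc w hw]
      simp only [affMap, Frame.pt, I, Q, Nat.cast_add, Nat.cast_mul, Prod.mk.injEq]
      constructor <;> ring
    · rintro c - _ ⟨i, k, h, rfl⟩ _ ⟨i', k', h', rfl⟩ α β hα hβ hαβ
      obtain ⟨h1, h2, h3, h4⟩ := h
      obtain ⟨h1', h2', h3', h4'⟩ := h'
      refine ⟨α * i + β * i', α * k + β * k', ⟨?_, ?_, ?_, ?_⟩, ?_⟩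
      · linear_combination α * h1 + β * h1' - (i₀ + j c * L : ℝ) * hαβ
      · linear_combination α * h2 + β * h2' + (i₀ + j c * L + L - 1 : ℝ) * hαβ
      · linear_combination α * h3 + β * h3' - (K : ℝ) * hαβ
      · linear_combination α * h4 + β * h4' + (K + s - 1 : ℝ) * hαβ
      · ext <;> simp [Frame.pt] <;> ring
    · intro c hc w hw
      exact ⟨_, _, hBox c hc w hw, (hGr c hc w hw).symm⟩
    · rintro c hc ⟨i, k, hb, he⟩
      exact hz0 c i k hb (he.trans hP0)
    · rintro c hc c' hc' hcc _ ⟨i, k, hb, rfl⟩ ⟨i', k', hb', he⟩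
      obtain ⟨hix, hi, -⟩ := hframe c' hc' c hc _ _ _ _ 1 hb' hb one_pos (by rw [he, one_smul])
      rw [one_mul] at hi
      exact hcol c hc c' hc' hcc hix.symm _ _ _ hb (hi ▸ hb')
    · intro c hc z hz hzB
      rw [(hcross c hc c hc z hz hzB).2, ← hGr c hc c (T.self_mem_desc c)]
    · intro c hc c' hc' hcc z hz hzB
      exact hcc (hcross c hc c' hc' z hz hzB).1
    · intro c hc c' hc' hcc z hz hz'
      simp only
      rw [hP0]
      by_contra hne
      obtain ⟨t, ht0, -, hzt⟩ := hedge0 c hc z hz hne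
      obtain ⟨t', ht0', -, hzt'⟩ := hedge0 c' hc' z hz' hne
      have hb := hBox c hc c (T.self_mem_desc c)
      have hb' := hBox c' hc' c' (T.self_mem_desc c')
      obtain ⟨hix, hi, hk⟩ := hframe c hc c' hc' _ _ _ _ (t⁻¹ * t') hb hb'
        (mul_pos (inv_pos.2 ht0) ht0')
        (by rw [mul_smul, ← hzt', hzt, smul_smul, inv_mul_cancel₀ ht0.ne', one_smul])
      rw [hQc, hQc] at hk
      have ht : t⁻¹ * t' = 1 := by
        have : (t⁻¹ * t' - 1) * K = 0 := by linarith
        rcases mul_eq_zero.1 this with h | h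
        · linarith
        · linarith
      rw [ht, one_mul] at hi
      exact hcol c hc c' hc' hcc hix _ _ _ hb (by rw [hi]; exact hb')

end ParTree

/-! ### Counting coprime pairs -/

lemma sum_inv_sq_le (m : ℕ) :
    ∑ d ∈ Finset.Icc 2 (m + 2), (1 : ℝ) / (d : ℝ) ^ 2 ≤ 3 / 4 - 1 / ((m : ℝ) + 2) := by
  induction m with
  | zero => norm_num
  | succ m ih =>
    rw [show m + 1 + 2 = (m + 2) + 1 by ring, Finset.sum_Icc_succ_top (by omega)]
    have h : (1 : ℝ) / ((m + 2 + 1 : ℕ) : ℝ) ^ 2 ≤ 1 / ((m : ℝ) + 2) - 1 / ((m : ℝ) + 3) := by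
      rw [div_sub_div _ _ (by positivity) (by positivity), div_le_div_iff₀ (by positivity)
        (by positivity)]
      push_cast
      nlinarith [Nat.cast_nonneg (α := ℝ) m]
    push_cast at h ⊢
    rw [show (m : ℝ) + 1 + 2 = m + 3 by ring]
    linarith

/-- The pairs `(u, a)` of positive integers with `u ≤ U`, `a ≤ N` that span the second vector of a
frame: the fraction `a / u` is reduced, and `u` is within a constant factor of `U`. -/
def slopes (U N : ℕ) : Finset (ℕ × ℕ) :=
  (Finset.Ioc 0 U ×ˢ Finset.Ioc 0 N).filter fun p => Nat.Coprime p.1 p.2 ∧ U ≤ 8 * p.1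

/-- At least one eighth of all pairs qualify: the condition `U ≤ 8 * u` excludes at most one eighth
of them, and a common divisor `d ≥ 2` excludes at most `∑ 1 / d ^ 2 ≤ 3 / 4`. -/
lemma card_slopes (U N : ℕ) : U * N ≤ 8 * (slopes U N).card := by
  classical
  have hcov : Finset.Ioc 0 U ×ˢ Finset.Ioc 0 N ⊆ slopes U N ∪
      (((Finset.Ioc 0 (U / 8)) ×ˢ Finset.Ioc 0 N) ∪
        (Finset.Icc 2 (U + 2)).biUnion fun d =>
          ((Finset.Ioc 0 U).filter (d ∣ ·)) ×ˢ ((Finset.Ioc 0 N).filter (d ∣ ·))) := by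
    rintro ⟨u, a⟩ h
    have h' := h
    simp only [Finset.mem_product, Finset.mem_Ioc] at h'
    simp only [Finset.mem_union, Finset.mem_biUnion, Finset.mem_product, Finset.mem_filter,
      slopes, Finset.mem_Ioc, Finset.mem_Icc]
    by_cases h1 : U ≤ 8 * u
    · by_cases h2 : Nat.Coprime u a
      · exact .inl ⟨h', h2, h1⟩
      · refine .inr (.inr ⟨Nat.gcd u a, ⟨?_, ?_⟩, ⟨h'.1, Nat.gcd_dvd_left _ _⟩,
          h'.2, Nat.gcd_dvd_right _ _⟩)
        · have := Nat.gcd_pos_of_pos_left a h'.1.1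
          have : Nat.gcd u a ≠ 1 := h2
          omega
        · have := Nat.gcd_le_left a h'.1.1
          omega
    · exact .inr (.inl ⟨⟨h'.1.1, by omega⟩, h'.2⟩)
  have hcard := ((Finset.card_le_card hcov).trans (Finset.card_union_le _ _)).trans
    (Nat.add_le_add_left ((Finset.card_union_le _ _).trans
      (Nat.add_le_add_left Finset.card_biUnion_le _)) _)
  simp only [Finset.card_product, Nat.card_Ioc, Nat.Ioc_filter_dvd_card_eq_div,
    Nat.sub_zero] at hcard
  have h1 : ((∑ d ∈ Finset.Icc 2 (U + 2), U / d * (N / d) : ℕ) : ℝ) ≤ (U * N : ℝ) * (3 / 4) := by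
    push_cast
    calc ∑ d ∈ Finset.Icc 2 (U + 2), ((U / d : ℕ) : ℝ) * ((N / d : ℕ) : ℝ)
        ≤ ∑ d ∈ Finset.Icc 2 (U + 2), (U * N : ℝ) * (1 / (d : ℝ) ^ 2) := by
          refine Finset.sum_le_sum fun d _ => ?_
          calc ((U / d : ℕ) : ℝ) * ((N / d : ℕ) : ℝ) ≤ (U / d : ℝ) * (N / d : ℝ) :=
                mul_le_mul Nat.cast_div_le Nat.cast_div_le (by positivity) (by positivity)
            _ = _ := by ring
      _ ≤ _ := by
          rw [← Finset.mul_sum]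
          refine mul_le_mul_of_nonneg_left ((sum_inv_sq_le U).trans ?_) (by positivity)
          have : (0 : ℝ) ≤ 1 / ((U : ℝ) + 2) := by positivity
          linarith
  have h2 : ((U / 8 : ℕ) : ℝ) * N ≤ U / 8 * N :=
    mul_le_mul_of_nonneg_right (by exact_mod_cast Nat.cast_div_le (α := ℝ) (m := U) (n := 8))
      (by positivity)
  have h3 : (U * N : ℝ) ≤ (slopes U N).card + (((U / 8 : ℕ) : ℝ) * N +
      ((∑ d ∈ Finset.Icc 2 (U + 2), U / d * (N / d) : ℕ) : ℝ)) := by exact_mod_cast hcard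
  have h4 : ((U * N : ℕ) : ℝ) ≤ ((8 * (slopes U N).card : ℕ) : ℝ) := by
    push_cast
    linarith
  exact_mod_cast h4

/-! ### The two families of frames -/

namespace ParTree

/-- A lattice basis with second vector `(u, a)` and first vector bounded by it, by Bézout. -/
lemma exists_frame {u a : ℕ} (hu : 0 < u) (ha : 0 < a) (h : Nat.Coprime u a) :
    ∃ F : Frame, F.u = u ∧ F.a = a ∧ F.x₁ ≤ u ∧ F.y₁ ≤ a := by
  rcases Nat.lt_or_ge 1 u with h1 | h1
  · obtain ⟨m, -, hm⟩ := Nat.exists_mul_mod_eq_one_of_coprime h.symm h1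
    have h2 : a * (m % u) % u = 1 := by rw [Nat.mul_mod, Nat.mod_mod, ← Nat.mul_mod, hm]
    have h3 : m % u < u := Nat.mod_lt _ hu
    refine ⟨⟨m % u, a * (m % u) / u, u, a, ?_⟩, rfl, rfl, h3.le, ?_⟩
    · have := Nat.div_add_mod (a * (m % u)) u
      omega
    · exact Nat.div_le_of_le_mul (by rw [mul_comm u]; exact Nat.mul_le_mul_left a h3.le)
  · obtain rfl : u = 1 := by omega
    exact ⟨⟨1, a - 1, 1, a, by omega⟩, rfl, rfl, le_rfl, by simp⟩

/-- A point of two thin cones around `(u, a)` and `(u', a')` with different slopes cannot exist,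
since the slopes differ by at least `1 / (u * u')`. -/
lemma cone_unique {U : ℕ} (F F' : Frame) (hu : F.u ≤ U) (hu' : F'.u ≤ U)
    (hU : U ≤ 8 * F.u) (hU' : U ≤ 8 * F'.u) (hc : Nat.Coprime F.u F.a)
    (hc' : Nat.Coprime F'.u F'.a) {i k i' k' t : ℝ} (hi : 0 ≤ i) (hk : 8 * i < k) (hi' : 0 ≤ i')
    (hk' : 8 * i' < k') (ht : 0 < t) (hu0 : 0 < F.u) (hu0' : 0 < F'.u)
    (he : F.pt i k = t • F'.pt i' k') :
    F.u = F'.u ∧ F.a = F'.a := by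
  have key : ∀ (F : Frame) (i k : ℝ), 0 < F.u → U ≤ 8 * F.u → 0 ≤ i → 8 * i < k →
      U * i < (F.pt i k).1 := by
    intro F i k h0 h8 hi hk
    have h0' : (0 : ℝ) < F.u := by exact_mod_cast h0
    have h8' : (U : ℝ) ≤ 8 * F.u := by exact_mod_cast h8
    have h1 : (0 : ℝ) ≤ F.x₁ * i := by positivity
    simp only [Frame.pt]
    nlinarith
  have hlt := key F i k hu0 hU hi hk
  have hlt' := key F' (t * i') (t * k') hu0' hU' (by positivity) (by nlinarith)
  rw [Frame.smul_pt] at he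
  have e1 := F.eq_fst i k
  have e2 := F'.eq_fst (t * i') (t * k')
  rw [← he] at hlt' e2
  set X := (F.pt i k).1
  set Y := (F.pt i k).2
  have hi2 : 0 ≤ t * i' := by positivity
  have huR : (F.u : ℝ) ≤ U := by exact_mod_cast hu
  have huR' : (F'.u : ℝ) ≤ U := by exact_mod_cast hu'
  have g1 : F'.u * i < X := lt_of_le_of_lt (mul_le_mul_of_nonneg_right huR' hi) hlt
  have g2 : F.u * (t * i') < X := lt_of_le_of_lt (mul_le_mul_of_nonneg_right huR hi2) hlt'
  have g1' : 0 ≤ F'.u * i := by positivity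
  have g2' : 0 ≤ F.u * (t * i') := by positivity
  have hX : 0 < X := lt_of_le_of_lt g1' g1
  have hdiff : ((F.a : ℝ) * F'.u - F'.a * F.u) * X = F'.u * i - F.u * (t * i') := by
    linear_combination F'.u * e1 - F.u * e2
  have heq : F.a * F'.u = F'.a * F.u := by
    rcases Nat.lt_trichotomy (F.a * F'.u) (F'.a * F.u) with h | h | h
    · have : (F.a : ℝ) * F'.u + 1 ≤ F'.a * F.u := by exact_mod_cast h
      nlinarith
    · exact h
    · have : (F'.a : ℝ) * F.u + 1 ≤ F.a * F'.u := by exact_mod_cast h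
      nlinarith
  have huu : F.u = F'.u := Nat.dvd_antisymm
    (hc.dvd_of_dvd_mul_left (heq ▸ Dvd.intro_left _ rfl))
    (hc'.dvd_of_dvd_mul_left (heq ▸ Dvd.intro_left _ rfl))
  refine ⟨huu, ?_⟩
  rw [← huu] at heq
  exact Nat.eq_of_mul_eq_mul_right hu0 heq

/-- Distributing finitely many vertices over `q` boxes in each frame of `S`. -/
lemma exists_slots {V ι : Type} [Inhabited ι] (C : Finset V) (S : Finset ι) (q : ℕ)
    (h : C.card ≤ S.card * q) :
    ∃ (ix : V → ι) (j : V → ℕ), (∀ c ∈ C, ix c ∈ S) ∧ (∀ c ∈ C, j c < q) ∧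
      ∀ c ∈ C, ∀ c' ∈ C, c ≠ c' → ix c = ix c' → j c ≠ j c' := by
  classical
  obtain ⟨e⟩ := Function.Embedding.nonempty_of_card_le (α := C) (β := (S ×ˢ Finset.range q : Finset _))
    (by simpa using h)
  refine ⟨fun v => if hv : v ∈ C then (e ⟨v, hv⟩).1.1 else default,
    fun v => if hv : v ∈ C then (e ⟨v, hv⟩).1.2 else 0, ?_, ?_, ?_⟩
  · intro c hc
    simp only [hc, dite_true]
    exact (Finset.mem_product.1 (e ⟨c, hc⟩).2).1
  · intro c hc
    simp only [hc, dite_true]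
    exact Finset.mem_range.1 (Finset.mem_product.1 (e ⟨c, hc⟩).2).2
  · intro c hc c' hc' hne h1 h2
    simp only [hc, hc', dite_true] at h1 h2
    have := e.injective (Subtype.ext (Prod.ext h1 h2))
    exact hne (Subtype.ext_iff.1 this)

variable {V : Type} [Fintype V] (T : ParTree V)

/-- `T` has a crossing-free drawing in the box `[0, W) × [0, H)` of the grid, with the root at the
origin and alone in its column. The vertical axis points downwards. -/
def Fits (W H : ℕ) : Prop :=
  ∃ X Y : V → ℕ, X T.root = 0 ∧ Y T.root = 0 ∧
    (∀ w, w ≠ T.root → 1 ≤ X w ∧ X w < W ∧ Y w < H) ∧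
    (∀ w, w ≠ T.root → Y (T.par w) ≤ Y w) ∧
    T.Planar T.root (fun w => ((X w : ℝ), (Y w : ℝ)))

/-- For `A ≤ s` the frames are shears `(1, Δ * g), (0, 1)`, each holding `A` boxes that start at
column `A * L`. -/
lemma fits_of_le {s n A L : ℕ} (hA : 1 ≤ A) (hAs : A ≤ s) (hL1 : 1 ≤ L)
    (hn : (T.children T.root).card ≤ n)
    (hs : ∀ c ∈ T.children T.root, (T.desc c).card ≤ s)
    (hL : ∀ x, 2 ^ x ≤ s → x < L) :
    T.Fits (10 * A * L) (320 * s * L * (n / A + 1)) := by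
  have hAL : 1 ≤ A * L := Nat.mul_pos hA hL1
  set N := n / A + 1 with hN
  set Δ := s / (A * L) + 1 with hΔ
  have hΔ1 : s < A * L * Δ := Nat.lt_mul_div_succ s hAL
  have hΔ2 : A * L * Δ ≤ s + A * L := by
    rw [hΔ, Nat.mul_succ]
    exact Nat.add_le_add_right (Nat.mul_div_le _ _) _
  have hNn : n ≤ N * A := by
    rw [mul_comm]
    exact (Nat.lt_mul_div_succ n hA).le
  obtain ⟨ix, j, hix, hj, hinj⟩ := exists_slots (T.children T.root) (Finset.range N) A
    (by rw [Finset.card_range]; exact hn.trans hNn)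
  have hd : ∀ g : ℕ, 1 * 1 = 0 * (Δ * g) + 1 := by intro g; omega
  obtain ⟨X, Y, hX, hY, hXY, hmono, hP⟩ := T.exists_fan L s A (A * L) 1 le_rfl hs hL
    (fun g => ⟨1, Δ * g, 0, 1, hd g⟩) ix j hj hinj (by
      rintro c hc c' hc' i k i' k' t hi - hk hk2 hi' - hk' hk2' ht he
      simp only [Frame.pt, Prod.smul_mk, smul_eq_mul, Prod.mk.injEq] at he
      obtain ⟨he1, he2⟩ := he
      push_cast at *
      have hALR : (1 : ℝ) ≤ A * L := by exact_mod_cast hAL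
      have hΔR : (s : ℝ) < A * L * Δ := by exact_mod_cast hΔ1
      have e1 : i = t * i' := by linarith
      have hΔ0 : (0 : ℝ) < Δ := by positivity
      have b1 : k < Δ * i := by nlinarith
      have b2' : k' < Δ * i' := by nlinarith
      have b2 : t * k' < Δ * i := by rw [e1]; nlinarith
      have b3 : 0 < t * k' := by positivity
      have hdiff : ((ix c : ℝ) - ix c') * (Δ * i) = t * k' - k := by
        rw [e1] at he2 ⊢
        linarith
      rcases Nat.lt_trichotomy (ix c) (ix c') with h | h | h
      · have : (ix c : ℝ) + 1 ≤ ix c' := by exact_mod_cast h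
        nlinarith
      · exact h
      · have : (ix c' : ℝ) + 1 ≤ ix c := by exact_mod_cast h
        nlinarith)
  refine ⟨X, Y, hX, hY, fun w hw => ?_, hmono, hP⟩
  obtain ⟨c, hc, i, k, hi, hi2, hk, hk2, h1, h2⟩ := hXY w hw
  simp only at h1 h2
  have hg := Finset.mem_range.1 (hix c hc)
  refine ⟨by omega, by rw [show 10 * A * L = 10 * (A * L) by ring]; omega, ?_⟩
  have h3 : Δ * ix c * i ≤ 4 * (s * L * N) := calc
    Δ * ix c * i ≤ Δ * N * (2 * (A * L)) := Nat.mul_le_mul (Nat.mul_le_mul_left _ hg.le) (by omega)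
    _ = 2 * (A * L * Δ) * N := by ring
    _ ≤ 2 * (2 * (s * L)) * N := by
      refine Nat.mul_le_mul_right _ (Nat.mul_le_mul_left _ (hΔ2.trans ?_))
      have h4 : A * L ≤ s * L := Nat.mul_le_mul_right L hAs
      have h5 : s * 1 ≤ s * L := Nat.mul_le_mul_left s hL1
      omega
    _ = _ := by ring
  have h4 : s * 1 * 1 ≤ s * L * N := Nat.mul_le_mul (Nat.mul_le_mul_left s hL1) (by omega)
  rw [show 320 * s * L * N = 320 * (s * L * N) by ring]
  omega

/-- For `s ≤ A` the frames point along the coprime vectors of `slopes U N`, with `U` about `A / s`;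
each holds about `s / L` boxes. -/
lemma fits_of_ge {s n A L : ℕ} (hs1 : 1 ≤ s) (hsA : s ≤ A) (hL1 : 1 ≤ L) (hLs : L ≤ s)
    (hn : (T.children T.root).card ≤ n)
    (hs : ∀ c ∈ T.children T.root, (T.desc c).card ≤ s)
    (hL : ∀ x, 2 ^ x ≤ s → x < L) :
    T.Fits (10 * A * L) (320 * s * L * (n / A + 1)) := by
  set U := A / s with hU
  set q := s / L with hq
  set N := 32 * L * (n / A + 1) with hN
  have hU1 : 1 ≤ U := Nat.div_pos hsA hs1
  have hq1 : 1 ≤ q := Nat.div_pos hLs hL1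
  have hUs : U * s ≤ A := Nat.div_mul_le_self _ _
  have hqL : q * L ≤ s := Nat.div_mul_le_self _ _
  have hqL1 : 1 ≤ q * L := Nat.mul_pos hq1 hL1
  have hUs' : A ≤ 2 * (U * s) := by
    have h1 : A < s * (U + 1) := Nat.lt_mul_div_succ A hs1
    have h2 : 1 * s ≤ U * s := Nat.mul_le_mul_right s hU1
    linarith
  have hqL' : s ≤ 2 * (q * L) := by
    have h1 : s < L * (q + 1) := Nat.lt_mul_div_succ s hL1
    have h2 : 1 * L ≤ q * L := Nat.mul_le_mul_right L hq1
    linarith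
  -- the number `(slopes U N).card * q` of available boxes suffices
  have hcount : n ≤ (slopes U N).card * q := by
    have h1 := Nat.mul_le_mul_right q (card_slopes U N)
    have h2 : n < A * (n / A + 1) := Nat.lt_mul_div_succ n (by omega)
    have h3 : A ≤ 4 * (U * q * L) := by
      have := Nat.mul_le_mul_left U hqL'
      linarith
    have h4 := Nat.mul_le_mul_right (n / A + 1) h3
    have h5 : U * N * q = 8 * (4 * (U * q * L) * (n / A + 1)) := by rw [hN]; ring
    linarith
  obtain ⟨ix, j, hix, hj, hinj⟩ := exists_slots (T.children T.root) (slopes U N) q (hn.trans hcount)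
  have hslope : ∀ p ∈ slopes U N, 0 < p.1 ∧ p.1 ≤ U ∧ 0 < p.2 ∧ p.2 ≤ N ∧
      Nat.Coprime p.1 p.2 ∧ U ≤ 8 * p.1 := by
    intro p hp
    simp only [slopes, Finset.mem_filter, Finset.mem_product, Finset.mem_Ioc] at hp
    exact ⟨hp.1.1.1, hp.1.1.2, hp.1.2.1, hp.1.2.2, hp.2.1, hp.2.2⟩
  have hF : ∀ p : ℕ × ℕ, ∃ F : Frame, p ∈ slopes U N →
      F.u = p.1 ∧ F.a = p.2 ∧ F.x₁ ≤ p.1 ∧ F.y₁ ≤ p.2 := by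
    intro p
    by_cases hp : p ∈ slopes U N
    · obtain ⟨h1, -, h2, -, h3, -⟩ := hslope p hp
      obtain ⟨F, hF⟩ := exists_frame h1 h2 h3
      exact ⟨F, fun _ => hF⟩
    · exact ⟨⟨1, 0, 0, 1, rfl⟩, fun h => absurd h hp⟩
  choose F hF using hF
  obtain ⟨X, Y, hX, hY, hXY, hmono, hP⟩ := T.exists_fan L s q 0 (8 * (q * L)) (by omega) hs hL
    F ix j hj hinj (by
      rintro c hc c' hc' i k i' k' t hi hi2 hk - hi' hi2' hk' - ht he
      push_cast at hi hi2 hk hi' hi2' hk'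
      obtain ⟨h1, h2, h3, h4, h5, h6⟩ := hslope _ (hix c hc)
      obtain ⟨h1', h2', h3', h4', h5', h6'⟩ := hslope _ (hix c' hc')
      obtain ⟨g1, g2, -, -⟩ := hF _ (hix c hc)
      obtain ⟨g1', g2', -, -⟩ := hF _ (hix c' hc')
      have := cone_unique (U := U) (F (ix c)) (F (ix c')) (g1 ▸ h2) (g1' ▸ h2') (g1 ▸ h6)
        (g1' ▸ h6') (by rwa [g1, g2]) (by rwa [g1', g2']) hi (by linarith) hi' (by linarith)
        ht (g1 ▸ h1) (g1' ▸ h1') he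
      rw [g1, g2, g1', g2'] at this
      exact Prod.ext this.1 this.2)
  refine ⟨X, Y, hX, hY, fun w hw => ?_, hmono, hP⟩
  obtain ⟨c, hc, i, k, hi, hi2, hk, hk2, h1, h2⟩ := hXY w hw
  obtain ⟨p1, p2, p3, p4, -, -⟩ := hslope _ (hix c hc)
  obtain ⟨g1, g2, g3, g4⟩ := hF _ (hix c hc)
  rw [g1] at h1
  rw [g2] at h2
  have hik : i + k < 10 * s := by omega
  have hXle : X w ≤ U * (i + k) := by
    rw [h1, mul_add]
    exact Nat.add_le_add (Nat.mul_le_mul_right _ (g3.trans p2)) (Nat.mul_le_mul_right _ p2)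
  have hYle : Y w ≤ N * (i + k) := by
    rw [h2, mul_add]
    exact Nat.add_le_add (Nat.mul_le_mul_right _ (g4.trans p4)) (Nat.mul_le_mul_right _ p4)
  refine ⟨?_, ?_, ?_⟩
  · have : 1 * 1 ≤ (ix c).1 * k := Nat.mul_le_mul p1 (by omega)
    omega
  · have h3 := Nat.mul_lt_mul_of_pos_left hik hU1
    have h4 : A * 1 ≤ A * L := Nat.mul_le_mul_left A hL1
    linarith
  · have h3 := Nat.mul_lt_mul_of_pos_left hik (show 0 < N by positivity)
    have h4 : N * (10 * s) = 320 * s * L * (n / A + 1) := by rw [hN]; ring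
    omega

end ParTree

/-! ### From tree graphs to parent functions and back -/

lemma isParent_unique {V : Type} {G : SimpleGraph V} (hG : G.IsTree) {r u u' v : V}
    (h : IsParent G r u v) (h' : IsParent G r u' v) : u = u' := by
  have key : ∀ u, IsParent G r u v → ∃ p : G.Walk r v, p.IsPath ∧ p.penultimate = u := by
    intro u hu
    obtain ⟨p, hp⟩ := hG.connected.exists_walk_length_eq_dist r u
    exact ⟨p.concat hu.1, Walk.isPath_of_length_eq_dist _ (by rw [Walk.length_concat, hp, hu.2]),
      Walk.penultimate_concat _ _⟩
  obtain ⟨p, hp, rfl⟩ := key u h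
  obtain ⟨p', hp', rfl⟩ := key u' h'
  rw [(hG.existsUnique_path r v).unique hp hp']

lemma exists_isParent {V : Type} {G : SimpleGraph V} (hG : G.IsTree) {r v : V} (hv : v ≠ r) :
    ∃ u, IsParent G r u v := by
  obtain ⟨p, hp⟩ := hG.connected.exists_walk_length_eq_dist r v
  have hn : ¬ p.Nil := fun h => hv h.eq.symm
  have hadj := p.adj_penultimate hn
  refine ⟨p.penultimate, hadj, ?_⟩
  have h1 : G.dist r p.penultimate ≤ p.length - 1 := by
    simpa using dist_le p.dropLast
  rcases hG.dist_eq_dist_add_one_of_adj r hadj with h | h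
  · omega
  · exact h.symm

/-- A tree graph with a distinguished vertex, with its parent function. -/
lemma exists_parTree {V : Type} [Fintype V] {G : SimpleGraph V} (hG : G.IsTree) (r : V) :
    ∃ T : ParTree V, T.root = r ∧ (∀ v, v ≠ r → IsParent G r (T.par v) v) ∧
      ∀ v, (T.desc v : Set V) ⊆ {w | InSubtree G r v w} := by
  classical
  have h : ∀ v, ∃ u, v ≠ r → IsParent G r u v := fun v => by
    by_cases hv : v = r
    · exact ⟨v, fun h => absurd hv h⟩
    · obtain ⟨u, hu⟩ := exists_isParent hG hv
      exact ⟨u, fun _ => hu⟩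
  choose par hpar using h
  refine ⟨⟨r, par, G.dist r, fun v hv => (hpar v hv).2⟩, rfl, hpar, fun v w hw => ?_⟩
  have hw' := (ParTree.mem_desc _).1 (Finset.mem_coe.1 hw)
  change G.dist r v + G.dist v w = G.dist r w
  induction hw' with
  | refl => simp
  | @tail b c h1 h2 ih =>
    obtain ⟨h3, h4⟩ := h2
    have h5 := hpar c h3
    change par c = b at h4
    rw [h4] at h5
    have ih := ih (Finset.mem_coe.2 ((ParTree.mem_desc _).2 h1))
    have h6 : G.dist v c ≤ G.dist v b + G.dist b c := hG.connected.dist_triangle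
    have h7 : G.dist r c ≤ G.dist r v + G.dist v c := hG.connected.dist_triangle
    have h8 : G.dist b c = 1 := dist_eq_one_iff_adj.2 h5.1
    have h9 := h5.2
    omega

lemma adj_iff_par {V : Type} [Fintype V] {G : SimpleGraph V} (hG : G.IsTree) {r : V}
    {T : ParTree V} (hpar : ∀ v, v ≠ r → IsParent G r (T.par v) v) {u v : V}
    (h : G.Adj u v) : (v ≠ r ∧ T.par v = u) ∨ (u ≠ r ∧ T.par u = v) := by
  have hne : ∀ a b : V, G.dist r a = G.dist r b + 1 → a ≠ r := by
    rintro a b h1 rfl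
    simp at h1
  rcases hG.dist_eq_dist_add_one_of_adj r h with h1 | h1
  · have := hne _ _ h1
    exact .inr ⟨this, isParent_unique hG (hpar u this) ⟨h.symm, h1.symm⟩⟩
  · have := hne _ _ h1
    exact .inl ⟨this, isParent_unique hG (hpar v this) ⟨h, h1.symm⟩⟩

/-- For a tree, disjointness of vertices from non-incident edges follows from the condition on
pairs of edges, since every vertex lies on some edge as soon as there is one. -/
lemma isStraightLineDrawing_of_planar {V : Type} [Fintype V] {G : SimpleGraph V} (hG : G.IsTree)
    {r : V} {T : ParTree V} (hr : T.root = r) (hpar : ∀ v, v ≠ r → IsParent G r (T.par v) v)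
    {f : V → ℝ × ℝ} (hf : T.Planar T.root f) : IsStraightLineDrawing G f := by
  have hinj : Function.Injective f := fun a b hab =>
    hf.1 (T.mem_desc_root a) (T.mem_desc_root b) hab
  have hedge : ∀ u v u' v', G.Adj u v → G.Adj u' v' → s(u, v) ≠ s(u', v') →
      ∀ z ∈ segment ℝ (f u) (f v), z ∈ segment ℝ (f u') (f v') →
        ∃ t, f t = z ∧ (t = u ∨ t = v) ∧ (t = u' ∨ t = v') := by
    -- an edge is the edge above one of its endpoints
    have hup : ∀ u v, G.Adj u v → ∃ w, w ≠ T.root ∧ s(u, v) = s(T.par w, w) ∧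
        segment ℝ (f u) (f v) = segment ℝ (f (T.par w)) (f w) ∧
        ∀ t, (t = w ∨ t = T.par w) → (t = u ∨ t = v) := by
      intro u v h
      rcases adj_iff_par hG hpar h with ⟨h1, rfl⟩ | ⟨h1, rfl⟩
      · exact ⟨v, hr ▸ h1, rfl, rfl, fun t ht => ht.symm⟩
      · exact ⟨u, hr ▸ h1, Sym2.eq_swap, segment_symm _ _ _, fun t ht => ht⟩
    intro u v u' v' h h' hne z hz hz'
    obtain ⟨w, hw, e1, e2, e3⟩ := hup u v h
    obtain ⟨w', hw', e1', e2', e3'⟩ := hup u' v' h'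
    rw [e2] at hz
    rw [e2'] at hz'
    obtain ⟨t, ht, h1, h2⟩ := hf.2 w (T.mem_desc_root w) w' (T.mem_desc_root w') hw hw'
      (fun hww => hne (by rw [e1, e1', hww])) z hz hz'
    exact ⟨t, ht, e3 t h1, e3' t h2⟩
  refine ⟨hinj, ?_, ?_⟩
  · intro u v w h hwu hwv hmem
    have : ∃ w', G.Adj w w' := by
      by_cases hw : w = r
      · have : Nontrivial V := ⟨w, u, hwu⟩
        exact hG.connected.preconnected.exists_adj_of_nontrivial w
      · exact ⟨_, (hpar w hw).1.symm⟩
    obtain ⟨w', hw'⟩ := this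
    have hne : s(u, v) ≠ s(w, w') := fun he => by
      have : w ∈ s(u, v) := he ▸ Sym2.mem_mk_left w w'
      rcases Sym2.mem_iff.1 this with h | h
      · exact hwu h
      · exact hwv h
    obtain ⟨t, ht, h1, -⟩ := hedge u v w w' h hw' hne (f w) hmem (left_mem_segment _ _ _)
    have := hinj ht
    subst this
    exact h1.elim hwu hwv
  · intro u v u' v' h h' hne
    ext z
    constructor
    · rintro ⟨hz, hz'⟩
      obtain ⟨t, ht, h1, h2⟩ := hedge u v u' v' h h' hne z hz hz'
      exact ⟨t, ⟨h1, h2⟩, ht⟩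
    · rintro ⟨t, ⟨h1, h2⟩, rfl⟩
      refine ⟨?_, ?_⟩
      · rcases h1 with rfl | rfl
        · exact left_mem_segment _ _ _
        · exact right_mem_segment _ _ _
      · rcases h2 with rfl | rfl
        · exact left_mem_segment _ _ _
        · exact right_mem_segment _ _ _

/-- Reflecting the picture turns a drawing in `[0, W) × [0, H)` with downward vertical axis into an
upward grid drawing. -/
lemma exists_drawing {V : Type} [Fintype V] {G : SimpleGraph V} (hG : G.IsTree)
    {r : V} {T : ParTree V} (hr : T.root = r) (hpar : ∀ v, v ≠ r → IsParent G r (T.par v) v)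
    {W H : ℕ} (hW : 0 < W) (hH : 0 < H) (h : T.Fits W H) :
    ∃ f : V → ℝ × ℝ, IsGridDrawing G f W H ∧ IsUpward G r f ∧ f r = (1, (H : ℝ)) ∧
      ∀ v : V, v ≠ r → (f v).1 ≠ 1 := by
  obtain ⟨X, Y, hX, hY, hb, hmono, hP⟩ := h
  rw [hr] at hX hY hb hmono
  have hbound : ∀ w, X w < W ∧ Y w < H := fun w => by
    by_cases hw : w = r
    · rw [hw, hX, hY]
      exact ⟨hW, hH⟩
    · exact (hb w hw).2
  refine ⟨fun w => ParTree.affMap 1 1 0 H 0 (-1) ((X w : ℝ), (Y w : ℝ)),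
    ⟨isStraightLineDrawing_of_planar hG hr hpar (hP.map (by norm_num)), fun w => ?_⟩, ?_, ?_, ?_⟩
  · have := hbound w
    refine ⟨1 + X w, H - Y w, by omega, by omega, by omega, by omega, ?_⟩
    simp only [ParTree.affMap]
    push_cast
    ext <;> simp; ring
  · intro u v huv
    have hv : v ≠ r := by
      rintro rfl
      simpa using huv.2
    have h1 := hmono v hv
    rw [isParent_unique hG (hpar v hv) huv] at h1
    have h2 : (Y u : ℝ) ≤ Y v := by exact_mod_cast h1
    simp only [ParTree.affMap]
    linarith
  · simp [ParTree.affMap, hX, hY]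
  · intro v hv hv1
    have h1 : (1 : ℝ) ≤ X v := by exact_mod_cast (hb v hv).1
    simp only [ParTree.affMap] at hv1
    linarith

/-- Lemma 2 (augmented-star algorithm): if every subtree hanging off the root has size at
most `s`, the tree has an upward grid drawing of width `O(A log s)` and height
`O((n/A)·s·log² s)`, with the root at the top-left corner and alone on the left side. -/
theorem stmt5 : ∃ C : ℝ, 0 < C ∧
    ∀ (s n A : ℕ), 2 ≤ s → 1 ≤ A → A ≤ n →
    ∀ (V : Type) [Fintype V] (G : SimpleGraph V), G.IsTree → Fintype.card V = n →
    ∀ r : V,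
    (∀ v : V, IsParent G r r v → {w : V | InSubtree G r v w}.ncard ≤ s) →
    ∃ (W H : ℕ) (f : V → ℝ × ℝ), IsGridDrawing G f W H ∧ IsUpward G r f ∧
      (W : ℝ) ≤ C * A * Real.logb 2 s ∧
      (H : ℝ) ≤ C * ((n : ℝ) / A) * s * (Real.logb 2 s) ^ 2 ∧
      f r = (1, (H : ℝ)) ∧ ∀ v : V, v ≠ r → (f v).1 ≠ 1 := by
  -- `L ≤ 2 * log₂ s` and `⌊n / A⌋ + 1 ≤ 2 * n / A` turn the factor `320` into `1280`
  refine ⟨1280, by norm_num, fun s n A hs hA hAn V _ G hG hn r hsub => ?_⟩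
  obtain ⟨T, hr, hpar, hdesc⟩ := exists_parTree hG r
  have hs' : ∀ c ∈ T.children T.root, (T.desc c).card ≤ s := by
    intro c hc
    obtain ⟨h1, h2⟩ := T.mem_children.1 hc
    have h3 := hpar c (hr ▸ h1)
    rw [h2, hr] at h3
    rw [← Set.ncard_coe_finset]
    exact (Set.ncard_le_ncard (hdesc c) (Set.toFinite _)).trans (hsub c h3)
  have hcard : (T.children T.root).card ≤ n := by
    rw [← hn]
    exact Finset.card_le_univ _
  set L := Nat.log 2 s + 1 with hLdef
  have hL : ∀ x, 2 ^ x ≤ s → x < L := fun x hx =>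
    Nat.lt_succ_of_le (Nat.le_log_of_pow_le (by norm_num) hx)
  have hLs : L ≤ s := Nat.succ_le_of_lt (Nat.log_lt_self 2 (by omega))
  have hfits : T.Fits (10 * A * L) (320 * s * L * (n / A + 1)) := by
    rcases Nat.le_total A s with h | h
    · exact T.fits_of_le hA h (by omega) hcard hs' hL
    · exact T.fits_of_ge (by omega) h (by omega) hLs hcard hs' hL
  have hL1 : 0 < L := by omega
  obtain ⟨f, h1, h2, h3, h4⟩ := exists_drawing hG hr hpar (by positivity) (by positivity) hfits
  refine ⟨_, _, f, h1, h2, ?_, ?_, h3, h4⟩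
  all_goals
    have hlog1 : 1 ≤ Real.logb 2 s := by
      rw [Real.le_logb_iff_rpow_le (by norm_num) (by positivity), Real.rpow_one]
      exact_mod_cast hs
    have hLlog : (L : ℝ) ≤ 2 * Real.logb 2 s := by
      have := Real.natLog_le_logb s 2
      push_cast at this
      rw [hLdef]
      push_cast
      linarith
    have hA' : (1 : ℝ) ≤ A := by exact_mod_cast hA
    push_cast
  · calc (10 : ℝ) * A * L ≤ 10 * A * (2 * Real.logb 2 s) := by gcongr
      _ = 20 * (A * Real.logb 2 s) := by ring
      _ ≤ 1280 * (A * Real.logb 2 s) := by gcongr; norm_num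
      _ = _ := by ring
  · have hnA : (1 : ℝ) ≤ n / A := by
      rw [le_div_iff₀ (by positivity), one_mul]
      exact_mod_cast hAn
    have hdiv : ((n / A : ℕ) : ℝ) ≤ n / A := Nat.cast_div_le
    calc (320 : ℝ) * s * L * ((n / A : ℕ) + 1)
        ≤ 320 * s * (2 * Real.logb 2 s) * (n / A + n / A) := by gcongr
      _ = 1280 * (n / A) * s * (Real.logb 2 s * 1) := by ring
      _ ≤ 1280 * (n / A) * s * (Real.logb 2 s * Real.logb 2 s) := by gcongr
      _ = _ := by ring
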